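/- arXiv:1709.09852 — 7 statements merged into one kernel-verified Lean document; each statement's English description precedes it below -/
import Mathlib

section
/- Let q1 > 0, C > 0, g > 0, 0 ≤ t < 1, and s ≥ 0. Define the feasible set F = { a ∈ [0, q1] : (1 − t)·g·(q1 − a) ≤ s } and the objective J(a) = (1 − t)(a + C)(q1 − a)g − C·s. Define a^D(t,s,g) = q1 − s/((1 − t)g) if 0 ≤ s ≤ (1 − t)·g·min(q1, (q1 + C)/2), and a^D(t,s,g) = max(0, q1 − C)/2 otherwise. Then a^D(t,s,g) ∈ F and J(a) ≤ J(a^D(t,s,g)) for all a ∈ F; that is, a^D(t,s,g) maximizes J over F. -/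
/-- Deterministic pricing problem with linear demand `q(a) = q1 - a` on
`A = [0, q1]`: the pricing function `a^D(t,s,g)` maximizes the profit
`J(a) = (1-t)(a+C)(q1-a)g - C·s` over the feasible set
`F = {a ∈ [0,q1] : (1-t)·g·(q1-a) ≤ s}`. -/
theorem deterministic_linear_pricing_optimal
    (q1 C g t s : ℝ) (hq1 : 0 < q1) (hC : 0 < C) (hg : 0 < g)
    (ht0 : 0 ≤ t) (ht1 : t < 1) (hs : 0 ≤ s)
    (F : Set ℝ) (hF : F = {a | a ∈ Set.Icc 0 q1 ∧ (1 - t) * g * (q1 - a) ≤ s})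
    (J : ℝ → ℝ) (hJ : J = fun a => (1 - t) * (a + C) * (q1 - a) * g - C * s)
    (aD : ℝ)
    (haD : aD = if s ≤ (1 - t) * g * min q1 ((q1 + C) / 2)
      then q1 - s / ((1 - t) * g) else max 0 (q1 - C) / 2) :
    aD ∈ F ∧ ∀ a ∈ F, J a ≤ J aD := by
  have hk : 0 < (1 - t) * g := mul_pos (by linarith) hg
  obtain ⟨k, hkd⟩ : ∃ k, k = (1 - t) * g := ⟨_, rfl⟩
  obtain ⟨r, hr⟩ : ∃ r, r = s / k := ⟨_, rfl⟩
  rw [← hkd] at hk hF haD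
  have hsr : s = k * r := by rw [hr]; field_simp
  rw [← hr, hsr] at haD
  have hr0 : 0 ≤ r := by rw [hr]; positivity
  have hFm : ∀ a, a ∈ F ↔ (0 ≤ a ∧ a ≤ q1) ∧ q1 - a ≤ r := by
    intro a
    rw [hF, hsr, Set.mem_setOf_eq, Set.mem_Icc, mul_le_mul_iff_right₀ hk]
  have hJm : ∀ a b, (a + C) * (q1 - a) ≤ (b + C) * (q1 - b) → J a ≤ J b := by
    intro a b h
    have h2 := mul_le_mul_of_nonneg_left h hk.le
    rw [hkd] at h2
    rw [hJ]
    simp only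
    nlinarith [h2]
  clear hJ hF
  split_ifs at haD with h
  · rw [mul_le_mul_iff_right₀ hk, le_min_iff] at h
    subst haD
    refine ⟨(hFm _).2 ⟨⟨by linarith, by linarith⟩, by linarith⟩, ?_⟩
    intro a ha
    obtain ⟨⟨h0, h1⟩, h2⟩ := (hFm a).1 ha
    apply hJm
    nlinarith [mul_nonneg (sub_nonneg.2 h2) (show 0 ≤ C + a - r by linarith)]
  · rw [mul_le_mul_iff_right₀ hk, not_le] at h
    rcases le_total q1 C with hc | hc
    · rw [min_eq_left (by linarith)] at h
      rw [max_eq_left (by linarith)] at haD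
      have h0 : aD = 0 := by linarith
      subst h0
      refine ⟨(hFm _).2 ⟨⟨by linarith, by linarith⟩, by linarith⟩, ?_⟩
      intro a ha
      obtain ⟨⟨h0, h1⟩, h2⟩ := (hFm a).1 ha
      apply hJm
      nlinarith [mul_nonneg h0 (show 0 ≤ C - q1 + a by linarith)]
    · rw [min_eq_right (by linarith)] at h
      rw [max_eq_right (by linarith)] at haD
      refine ⟨(hFm _).2 ⟨⟨by linarith, by linarith⟩, by linarith⟩, ?_⟩
      intro a ha
      apply hJm
      subst haD
      nlinarith [sq_nonneg (a - (q1 - C) / 2)]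
end

section
/- Let q1 > 0, C > 0, g > 0, 0 ≤ t < 1, and s ≥ 0. With the feasible set F = { a ∈ [0, q1] : (1 − t)·g·(q1 − a) ≤ s } and objective J(a) = (1 − t)(a + C)(q1 − a)g − C·s, the maximum value of J over F equals v^D(t,s,g), where v^D(t,s,g) = q1·s − s²/((1 − t)g) if 0 ≤ s ≤ (1 − t)·g·min(q1, (q1 + C)/2), and v^D(t,s,g) = −C·s + V(C)·(1 − t)·g otherwise, with V(C) = ((q1 + C)/2)² if C < q1 and V(C) = q1·C if C ≥ q1. -/
/-- Deterministic pricing problem with linear demand `q(a) = q1 - a` on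
`A = [0, q1]`: the maximum of `J(a) = (1-t)(a+C)(q1-a)g - C·s` over the
feasible set `F = {a ∈ [0,q1] : (1-t)·g·(q1-a) ≤ s}` equals the
deterministic value function `v^D(t,s,g)`. -/
theorem deterministic_linear_value_function
    (q1 C g t s : ℝ) (hq1 : 0 < q1) (hC : 0 < C) (hg : 0 < g)
    (ht0 : 0 ≤ t) (ht1 : t < 1) (hs : 0 ≤ s)
    (F : Set ℝ) (hF : F = {a | a ∈ Set.Icc 0 q1 ∧ (1 - t) * g * (q1 - a) ≤ s})
    (J : ℝ → ℝ) (hJ : J = fun a => (1 - t) * (a + C) * (q1 - a) * g - C * s)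
    (V : ℝ) (hV : V = if C < q1 then ((q1 + C) / 2) ^ 2 else q1 * C)
    (vD : ℝ)
    (hvD : vD = if s ≤ (1 - t) * g * min q1 ((q1 + C) / 2)
      then q1 * s - s ^ 2 / ((1 - t) * g) else -C * s + V * (1 - t) * g) :
    IsGreatest (J '' F) vD := by
  have hk : 0 < (1 - t) * g := mul_pos (by linarith) hg
  have key : ∀ m : ℝ, 0 ≤ m → m ≤ q1 → m ≤ (q1 + C) / 2 → (1 - t) * g * m ≤ s →
      (∀ x : ℝ, 0 ≤ x → x ≤ q1 → (1 - t) * g * x ≤ s → x ≤ m ∨ m = (q1 + C) / 2) →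
      vD = (1 - t) * g * ((q1 + C - m) * m) - C * s → IsGreatest (J '' F) vD := by
    intro m hm0 hm1 hm2 hms hx hv
    subst hF hJ
    refine ⟨⟨q1 - m, ⟨⟨by linarith, by linarith⟩, ?_⟩, ?_⟩, ?_⟩
    · rw [sub_sub_cancel]; exact hms
    · rw [hv]; ring
    · rintro _ ⟨a, ⟨⟨ha0, ha1⟩, ha⟩, rfl⟩
      have h : 0 ≤ (m - (q1 - a)) * (q1 + C - m - (q1 - a)) := by
        rcases hx (q1 - a) (by linarith) (by linarith) ha with h | h
        · exact mul_nonneg (by linarith) (by linarith)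
        · rw [h]; nlinarith [sq_nonneg ((q1 + C) / 2 - (q1 - a))]
      have h2 := mul_nonneg hk.le h
      rw [hv]
      show (1 - t) * (a + C) * (q1 - a) * g - C * s ≤ _
      linarith
  split_ifs at hvD with h1
  · obtain ⟨m, rfl⟩ : ∃ m, s = (1 - t) * g * m := ⟨s / ((1 - t) * g), (mul_div_cancel₀ s hk.ne').symm⟩
    have h2 := le_min_iff.1 (le_of_mul_le_mul_left h1 hk)
    refine key m (nonneg_of_mul_nonneg_right hs hk) h2.1 h2.2 le_rfl
      (fun x _ _ h => Or.inl (le_of_mul_le_mul_left h hk)) ?_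
    have e : ((1 - t) * g * m) ^ 2 / ((1 - t) * g) = (1 - t) * g * m ^ 2 := by
      rw [div_eq_iff hk.ne']; ring
    rw [hvD, e]; ring
  · split_ifs at hV with h3
    · rw [min_eq_right (by linarith)] at h1
      refine key ((q1 + C) / 2) (by linarith) (by linarith) le_rfl (by linarith)
        (fun _ _ _ _ => Or.inr rfl) ?_
      rw [hvD, hV]; ring
    · rw [min_eq_left (by linarith)] at h1
      refine key q1 hq1.le le_rfl (by linarith) (by linarith)
        (fun _ _ h _ => Or.inl h) ?_
      rw [hvD, hV]; ring
end

section
/- Let q1 > 0 and define v : ℝ³ → ℝ by v(t,s,g) = q1·s − s²/((1 − t)·g). Then for all (t,s,g) with 0 < t < 1, s > 0, and g > 0, the partial derivatives of v satisfy the deterministic Hamilton–Jacobi–Bellman equation for linear demand: ∂v/∂t (t,s,g) + (g/4)·(q1 − ∂v/∂s (t,s,g))² = 0. -/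
/-- The function `v(t,s,g) = q1·s - s²/((1-t)·g)` satisfies the deterministic
HJB equation for linear demand, `v_t + (g/4)(q1 - v_s)² = 0`, for
`0 < t < 1`, `s > 0`, `g > 0`. -/
theorem deterministic_linear_hjb_sellout_region
    (q1 : ℝ) (hq1 : 0 < q1)
    (v : ℝ → ℝ → ℝ → ℝ)
    (hv : ∀ t s g, v t s g = q1 * s - s ^ 2 / ((1 - t) * g)) :
    ∀ t s g : ℝ, 0 < t → t < 1 → 0 < s → 0 < g →
      deriv (fun t' => v t' s g) t
        + g / 4 * (q1 - deriv (fun s' => v t s' g) s) ^ 2 = 0 := by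
  intro t s g _ ht1 _ hg
  have h1 : (1 - t) ≠ 0 := by linarith
  have h2 : g ≠ 0 := hg.ne'
  have hD : (1 - t) * g ≠ 0 := mul_ne_zero h1 h2
  have ht : HasDerivAt (fun t' => v t' s g) (-(s ^ 2 / ((1 - t) ^ 2 * g))) t := by
    simp only [hv]
    have hd : HasDerivAt (fun t' : ℝ => (1 - t') * g) (-1 * g) t :=
      ((hasDerivAt_id t).const_sub 1).mul_const g
    have h := ((hasDerivAt_const t (s ^ 2)).div hd hD).const_sub (q1 * s)
    refine h.congr_deriv ?_
    field_simp
    ring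
  have hs : HasDerivAt (fun s' => v t s' g) (q1 - 2 * s / ((1 - t) * g)) s := by
    simp only [hv]
    have h := ((hasDerivAt_id s).const_mul q1).sub
      ((hasDerivAt_pow 2 s).div_const ((1 - t) * g))
    refine h.congr_deriv ?_
    norm_num
  rw [ht.deriv, hs.deriv]
  field_simp
  ring
end

section
/- Let q1 > 0, 0 < C < 1, g > 0, 0 ≤ t < 1, and s > 0. Define the feasible set F = { a ≥ 0 : (1 − t)·g·q1·e^{−a} ≤ s } and the objective J(a) = (1 − t)(a + C)·q1·e^{−a}·g − C·s. Define a^D(t,s,g) = log( q1·g·(1 − t)/s ) if 0 < s/(q1·g·(1 − t)) ≤ e^{C−1}, and a^D(t,s,g) = 1 − C otherwise. Then a^D(t,s,g) ∈ F and J(a) ≤ J(a^D(t,s,g)) for all a ∈ F; that is, a^D(t,s,g) maximizes J over F. -/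
theorem key_ineq (a b C : ℝ) (h0 : 0 ≤ b + C) (h : 0 ≤ (a - b) * (b + C - 1)) :
    (a + C) * Real.exp (-a) ≤ (b + C) * Real.exp (-b) := by
  have h1 := Real.add_one_le_exp (a - b)
  have h2 : a + C ≤ (b + C) * Real.exp (a - b) := by
    nlinarith [mul_le_mul_of_nonneg_left h1 h0]
  have h3 : Real.exp (-b) = Real.exp (a - b) * Real.exp (-a) := by
    rw [← Real.exp_add]; congr 1; ring
  rw [h3, ← mul_assoc]
  exact mul_le_mul_of_nonneg_right h2 (Real.exp_pos _).le

/-- Deterministic pricing problem with exponential demand `q(a) = q1·e^{-a}`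
on `A = [0, ∞)`: the pricing function `a^D(t,s,g)` maximizes the profit
`J(a) = (1-t)(a+C)·q1·e^{-a}·g - C·s` over the feasible set
`F = {a ≥ 0 : (1-t)·g·q1·e^{-a} ≤ s}`. -/
theorem deterministic_exponential_pricing_optimal
    (q1 C g t s : ℝ) (hq1 : 0 < q1) (hC0 : 0 < C) (hC1 : C < 1) (hg : 0 < g)
    (ht0 : 0 ≤ t) (ht1 : t < 1) (hs : 0 < s)
    (F : Set ℝ)
    (hF : F = {a | 0 ≤ a ∧ (1 - t) * g * (q1 * Real.exp (-a)) ≤ s})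
    (J : ℝ → ℝ)
    (hJ : J = fun a => (1 - t) * (a + C) * (q1 * Real.exp (-a)) * g - C * s)
    (aD : ℝ)
    (haD : aD = if s / (q1 * g * (1 - t)) ≤ Real.exp (C - 1)
      then Real.log (q1 * g * (1 - t) / s) else 1 - C) :
    aD ∈ F ∧ ∀ a ∈ F, J a ≤ J aD := by
  subst hF hJ
  have hK : 0 < q1 * g * (1 - t) := mul_pos (mul_pos hq1 hg) (by linarith)
  have hJle : ∀ a b : ℝ, 0 ≤ b + C → 0 ≤ (a - b) * (b + C - 1) →
      (1 - t) * (a + C) * (q1 * Real.exp (-a)) * g - C * s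
        ≤ (1 - t) * (b + C) * (q1 * Real.exp (-b)) * g - C * s := by
    intro a b h0 h
    have := mul_le_mul_of_nonneg_left (key_ineq a b C h0 h) hK.le
    linarith
  simp only [Set.mem_ofPred_eq]
  split_ifs at haD with hc
  · have he : Real.exp (-aD) = s / (q1 * g * (1 - t)) := by
      rw [haD, ← Real.log_inv, inv_div, Real.exp_log (div_pos hs hK)]
    have hKe : q1 * g * (1 - t) * Real.exp (-aD) = s := by
      rw [he]; exact mul_div_cancel₀ s hK.ne'
    rw [← he, Real.exp_le_exp] at hc
    refine ⟨⟨by linarith, by linarith⟩, ?_⟩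
    rintro a ⟨ha, hb⟩
    have h1 : Real.exp (-a) ≤ Real.exp (-aD) := by
      refine le_of_mul_le_mul_left ?_ hK
      linarith
    rw [Real.exp_le_exp] at h1
    exact hJle a aD (by linarith) (mul_nonneg (by linarith) (by linarith))
  · rw [not_le, lt_div_iff₀ hK] at hc
    have hn : -aD = C - 1 := by rw [haD]; ring
    refine ⟨⟨by linarith, by rw [hn]; linarith⟩, ?_⟩
    rintro a ⟨ha, hb⟩
    refine hJle a aD (by linarith) (le_of_eq ?_)
    rw [haD]; ring
end

section
/- Let q1 > 0 and define v(t,s,g) = s·log( q1·g·(1 − t)/s ). Then for all (t,s,g) with 0 < t < 1, s > 0, and g > 0, v satisfies the deterministic Hamilton–Jacobi–Bellman equation for exponential demand: ∂v/∂t (t,s,g) + g·q1·exp( −1 − ∂v/∂s (t,s,g) ) = 0. -/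
/-- The function `v(t,s,g) = s·log(q1·g·(1-t)/s)` satisfies the deterministic
HJB equation for exponential demand, `v_t + g·q1·exp(-1 - v_s) = 0`, for
`0 < t < 1`, `s > 0`, `g > 0`. -/
theorem deterministic_exponential_hjb_sellout_region
    (q1 : ℝ) (hq1 : 0 < q1)
    (v : ℝ → ℝ → ℝ → ℝ)
    (hv : ∀ t s g, v t s g = s * Real.log (q1 * g * (1 - t) / s)) :
    ∀ t s g : ℝ, 0 < t → t < 1 → 0 < s → 0 < g →
      deriv (fun t' => v t' s g) t
        + g * q1 * Real.exp (-1 - deriv (fun s' => v t s' g) s) = 0 := by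
  intro t s g _ ht1 hs hg
  have h1t : 0 < 1 - t := by linarith
  have hK : 0 < q1 * g * (1 - t) := by positivity
  have hKs : 0 < q1 * g * (1 - t) / s := by positivity
  have ht : HasDerivAt (fun t' => v t' s g) (-(s / (1 - t))) t := by
    simp only [hv]
    have h := (((((hasDerivAt_id t).const_sub 1).const_mul (q1 * g)).div_const s).log
      hKs.ne').const_mul s
    refine HasDerivAt.congr_deriv (f := _) h ?_
    simp only [id, Pi.div_apply]
    field_simp
  have hs' : HasDerivAt (fun s' => v t s' g) (Real.log (q1 * g * (1 - t) / s) - 1) s := by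
    simp only [hv]
    have h := (hasDerivAt_id s).mul
      (((hasDerivAt_const s (q1 * g * (1 - t))).div (hasDerivAt_id s) hs.ne').log hKs.ne')
    refine HasDerivAt.congr_deriv (f := _) h ?_
    simp only [id, Pi.div_apply]
    field_simp
    ring
  rw [ht.deriv, hs'.deriv]
  have e : -1 - (Real.log (q1 * g * (1 - t) / s) - 1)
      = -Real.log (q1 * g * (1 - t) / s) := by ring
  rw [e, Real.exp_neg, Real.exp_log hKs]
  field_simp
  ring
end

section
/- Let β > 0 and let f : ℝ → ℝ be twice continuously differentiable and satisfy the ODE β²·f''(η) + (3η + 2f(η))·f'(η) − f(η) = 0 for all η ∈ ℝ. Define u(τ,x) = τ^{1/2}·f( x/τ^{3/2} ) for τ > 0 and x ∈ ℝ. Then u satisfies the leading-order inner-layer PDE u_τ(τ,x) = (1/2)·(β·τ)²·u_xx(τ,x) + u(τ,x)·u_x(τ,x) for all τ > 0 and x ∈ ℝ. -/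
/-- If `f` is `C²` and solves the similarity ODE
`β²f'' + (3η + 2f)f' - f = 0`, then `u(τ,x) = τ^{1/2}·f(x/τ^{3/2})` solves
the leading-order inner-layer PDE `u_τ = (1/2)(βτ)²u_xx + u·u_x` for all
`τ > 0` and `x ∈ ℝ`. -/
theorem inner_layer_similarity_solution
    (β : ℝ) (hβ : 0 < β)
    (f : ℝ → ℝ) (hf : ContDiff ℝ 2 f)
    (hode : ∀ η : ℝ,
      β ^ 2 * deriv (deriv f) η + (3 * η + 2 * f η) * deriv f η - f η = 0)
    (u : ℝ → ℝ → ℝ)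
    (hu : ∀ τ x, u τ x = τ ^ ((1 : ℝ) / 2) * f (x / τ ^ ((3 : ℝ) / 2))) :
    ∀ τ > (0 : ℝ), ∀ x : ℝ,
      deriv (fun τ' => u τ' x) τ =
        1 / 2 * (β * τ) ^ 2 * deriv (fun x' => deriv (fun x'' => u τ x'') x') x
          + u τ x * deriv (fun x' => u τ x') x := by
  intro τ hτ x
  have hf1 : ∀ y, HasDerivAt f (deriv f y) y := fun y =>
    (hf.differentiable (by norm_num) y).hasDerivAt
  have hf2 : ∀ y, HasDerivAt (deriv f) (deriv (deriv f) y) y := fun y =>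
    (((contDiff_succ_iff_deriv (n := 1)).1 hf).2.2.differentiable (by norm_num) y).hasDerivAt
  simp only [hu]
  have hs : 0 < τ ^ ((1 : ℝ) / 2) := Real.rpow_pos_of_pos hτ _
  have hs2 : (τ ^ ((1 : ℝ) / 2)) ^ 2 = τ := by
    rw [← Real.rpow_natCast, ← Real.rpow_mul hτ.le]; norm_num
  have hs3 : τ ^ ((3 : ℝ) / 2) = (τ ^ ((1 : ℝ) / 2)) ^ 3 := by
    rw [← Real.rpow_natCast, ← Real.rpow_mul hτ.le]; norm_num
  have hsm : τ ^ ((1 : ℝ) / 2 - 1) = (τ ^ ((1 : ℝ) / 2))⁻¹ := by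
    rw [← Real.rpow_neg hτ.le]; norm_num
  have hsp : τ ^ ((3 : ℝ) / 2 - 1) = τ ^ ((1 : ℝ) / 2) := by norm_num
  have d1 : HasDerivAt (fun t : ℝ => t ^ ((1 : ℝ) / 2)) _ τ :=
    Real.hasDerivAt_rpow_const (Or.inl hτ.ne')
  have d3 : HasDerivAt (fun t : ℝ => t ^ ((3 : ℝ) / 2)) _ τ :=
    Real.hasDerivAt_rpow_const (Or.inl hτ.ne')
  have hne : τ ^ ((3 : ℝ) / 2) ≠ 0 := (Real.rpow_pos_of_pos hτ _).ne'
  have dt := d1.mul ((hf1 (x / τ ^ ((3 : ℝ) / 2))).comp τ ((hasDerivAt_const τ x).div d3 hne))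
  have et : deriv (fun t : ℝ => t ^ ((1 : ℝ) / 2) * f (x / t ^ ((3 : ℝ) / 2))) τ = _ := dt.deriv
  have ex : ∀ y, deriv (fun z : ℝ => τ ^ ((1 : ℝ) / 2) * f (z / τ ^ ((3 : ℝ) / 2))) y =
      τ ^ ((1 : ℝ) / 2) * (deriv f (y / τ ^ ((3 : ℝ) / 2)) * (1 / τ ^ ((3 : ℝ) / 2))) := fun y =>
    (((hf1 (y / τ ^ ((3 : ℝ) / 2))).comp y ((hasDerivAt_id y).div_const _)).const_mul _).deriv
  have exx : deriv (fun y : ℝ => τ ^ ((1 : ℝ) / 2) *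
      (deriv f (y / τ ^ ((3 : ℝ) / 2)) * (1 / τ ^ ((3 : ℝ) / 2)))) x =
      τ ^ ((1 : ℝ) / 2) * (deriv (deriv f) (x / τ ^ ((3 : ℝ) / 2)) * (1 / τ ^ ((3 : ℝ) / 2))
        * (1 / τ ^ ((3 : ℝ) / 2))) :=
    ((((hf2 (x / τ ^ ((3 : ℝ) / 2))).comp x
      ((hasDerivAt_id x).div_const _)).mul_const _).const_mul _).deriv
  simp only [ex, exx]
  rw [et]
  have ho := hode (x / τ ^ ((3 : ℝ) / 2))
  simp only [Function.comp_apply, Pi.div_apply, hsm, hsp]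
  rw [hs3] at ho ⊢
  generalize τ ^ ((1 : ℝ) / 2) = s at *
  subst hs2
  generalize deriv (deriv f) (x / s ^ 3) = f2 at *
  generalize deriv f (x / s ^ 3) = f1 at *
  generalize f (x / s ^ 3) = f0 at *
  have hs' := hs.ne'
  field_simp at ho ⊢
  linear_combination (-1) * ho
end

section
/- Let q1 > 0 and σ ∈ ℝ, and define φ(τ,ξ) = q1·ξ − ξ²/τ − σ²·ξ²/2 for τ > 0 and ξ > 0. Then the residual of φ in the transformed HJB equation satisfies, for all τ > 0 and ξ > 0, φ_τ(τ,ξ) − (σ²/2)·ξ²·φ_ξξ(τ,ξ) − (1/4)·(q1 − φ_ξ(τ,ξ))² = σ⁴·ξ²/4. In particular, in the outer region ξ < βτ, the deterministic value function φ⁰(τ,ξ) = q1ξ − ξ²/τ corrected by the second-order term φ²(τ,ξ) = −ξ²/2 satisfies the transformed HJB equation up to a remainder of order O(σ⁴). -/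
/-- The outer-expansion correction: `φ(τ,ξ) = q1·ξ - ξ²/τ - σ²ξ²/2` leaves a
residual of exactly `σ⁴ξ²/4` in the transformed HJB equation
`φ_τ = (σ²/2)ξ²φ_ξξ + (1/4)(q1 - φ_ξ)²`, i.e. the deterministic value
function corrected by the second-order term `-σ²ξ²/2` satisfies the
transformed HJB equation up to `O(σ⁴)`. -/
theorem outer_expansion_residual
    (q1 σ : ℝ) (hq1 : 0 < q1)
    (φ : ℝ → ℝ → ℝ)
    (hφ : ∀ τ ξ, φ τ ξ = q1 * ξ - ξ ^ 2 / τ - σ ^ 2 * ξ ^ 2 / 2) :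
    ∀ τ > (0 : ℝ), ∀ ξ > (0 : ℝ),
      deriv (fun τ' => φ τ' ξ) τ
        - σ ^ 2 / 2 * ξ ^ 2 * deriv (fun ξ' => deriv (φ τ) ξ') ξ
        - 1 / 4 * (q1 - deriv (φ τ) ξ) ^ 2
        = σ ^ 4 * ξ ^ 2 / 4 := by
  intro τ hτ ξ _
  have hne : τ ≠ 0 := ne_of_gt hτ
  have h1 : HasDerivAt (fun τ' => φ τ' ξ) (ξ ^ 2 / τ ^ 2) τ := by
    have e : (fun τ' => φ τ' ξ)
        = fun τ' => q1 * ξ - ξ ^ 2 * τ'⁻¹ - σ ^ 2 * ξ ^ 2 / 2 := by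
      funext t
      rw [hφ, div_eq_mul_inv (ξ ^ 2) t]
    rw [e]
    refine HasDerivAt.congr_deriv ((((hasDerivAt_inv hne).const_mul (ξ ^ 2)).const_sub (q1 * ξ)).sub_const
      (σ ^ 2 * ξ ^ 2 / 2)) ?_
    field_simp
  have h2 : ∀ x, HasDerivAt (φ τ) (q1 - 2 * x / τ - σ ^ 2 * x) x := by
    intro x
    have e : φ τ = fun y => q1 * y - (1 / τ + σ ^ 2 / 2) * y ^ 2 := by
      funext y
      rw [hφ]
      ring
    rw [e]
    refine HasDerivAt.congr_deriv (((hasDerivAt_id' x).const_mul q1).sub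
      ((hasDerivAt_pow 2 x).const_mul (1 / τ + σ ^ 2 / 2))) ?_
    norm_num
    ring
  have h3 : HasDerivAt (fun x => deriv (φ τ) x) (-(2 / τ + σ ^ 2)) ξ := by
    have e : (fun x => deriv (φ τ) x) = fun x => q1 - (2 / τ + σ ^ 2) * x := by
      funext x
      rw [(h2 x).deriv]
      ring
    rw [e]
    refine HasDerivAt.congr_deriv (((hasDerivAt_id' ξ).const_mul (2 / τ + σ ^ 2)).const_sub q1) ?_
    ring
  rw [h1.deriv, h3.deriv, (h2 ξ).deriv]
  field_simp
  ring
end
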